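/- Let G = ℝⁿ \ {0} with n ≥ 2, so that d_G(x) = |x| for x ∈ G. For every c > 0, each of the three functions φᶜ_G(x,y) = 2|x−y|/(c(|x| + |y|)), φ̂ᶜ_G(x,y) = log(1 + 2|x−y|/(c(|x| + |y|))), and φ̃ᶜ_G(x,y) = |x−y|/(|x−y| + c(|x| + |y|)) is a metric on ℝⁿ \ {0}. -/

import Mathlib

/-- `f` is a metric on the subset `S`. -/
def IsMetricOn {E : Type*} (S : Set E) (f : E → E → ℝ) : Prop :=
  (∀ x ∈ S, ∀ y ∈ S, 0 ≤ f x y) ∧ (∀ x ∈ S, ∀ y ∈ S, (f x y = 0 ↔ x = y)) ∧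
  (∀ x ∈ S, ∀ y ∈ S, f x y = f y x) ∧
  (∀ x ∈ S, ∀ y ∈ S, ∀ z ∈ S, f x y ≤ f x z + f z y)

/-!
Everything rests on the metric `d x y / (w x + w y)`, where `d` is a metric and the positive weight
`w` satisfies `d x y * w z ≤ d x z * w y + d z y * w x`; for `w = ‖·‖` the latter is Ptolemy's
inequality with the origin as fourth point. For the triangle inequality, write
`p, q, r` for the weights of `x, y, z`. Adding `p` times the triangle inequality for `d` to
Ptolemy's inequality settles the case `0 ≤ (p - q) * (p - r)`, and `q` in place of `p` settles
`0 ≤ (q - p) * (q - r)`. One of the two cases occurs, since these products add up to `(p - q) ^ 2`.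

The three functions are then compositions of this metric with functions of `t ≥ 0` that vanish
only at `0` and are monotone and subadditive: `2 / c * t`, `log (1 + 2 / c * t)` and `t / (t + c)`.
-/

theorem div_add_triangle_of_ptolemy_of_mul_sub_nonneg {p q r a b c : ℝ}
    (hp : 0 < p) (hq : 0 < q) (hr : 0 ≤ r) (hc : 0 ≤ c)
    (triangle : a ≤ b + c) (ptolemy : a * r ≤ b * q + c * p) (h : 0 ≤ (p - q) * (p - r)) :
    a / (p + q) ≤ b / (p + r) + c / (r + q) := by
  have weighted_sum : a * (p + r) ≤ b * (p + q) + c * (2 * p) := by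
    linarith [mul_le_mul_of_nonneg_right triangle hp.le]
  have coeff_le : 2 * p / ((p + r) * (p + q)) ≤ 1 / (r + q) := by
    rw [div_le_div_iff₀ (by positivity) (by positivity)]
    linarith
  calc a / (p + q) = a * (p + r) / ((p + r) * (p + q)) := by field_simp
    _ ≤ (b * (p + q) + c * (2 * p)) / ((p + r) * (p + q)) := by gcongr
    _ = b / (p + r) + c * (2 * p / ((p + r) * (p + q))) := by field_simp
    _ ≤ b / (p + r) + c * (1 / (r + q)) := by gcongr
    _ = b / (p + r) + c / (r + q) := by rw [mul_one_div]

theorem div_add_triangle_of_ptolemy {p q r a b c : ℝ}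
    (hp : 0 < p) (hq : 0 < q) (hr : 0 ≤ r) (hb : 0 ≤ b) (hc : 0 ≤ c)
    (triangle : a ≤ b + c) (ptolemy : a * r ≤ b * q + c * p) :
    a / (p + q) ≤ b / (p + r) + c / (r + q) := by
  have sum_nonneg : 0 ≤ (p - q) * (p - r) + (q - p) * (q - r) :=
    calc 0 ≤ (p - q) ^ 2 := sq_nonneg _
      _ = (p - q) * (p - r) + (q - p) * (q - r) := by ring
  rcases le_or_gt 0 ((p - q) * (p - r)) with h | h
  · exact div_add_triangle_of_ptolemy_of_mul_sub_nonneg hp hq hr hc triangle ptolemy h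
  · have swapped : a / (q + p) ≤ c / (q + r) + b / (r + p) :=
      div_add_triangle_of_ptolemy_of_mul_sub_nonneg hq hp hr hb
        (by rwa [add_comm]) (by rwa [add_comm]) (by linarith)
    rwa [add_comm q p, add_comm q r, add_comm r p, add_comm (c / _)] at swapped

theorem isMetricOn_dist {X : Type*} [MetricSpace X] (S : Set X) : IsMetricOn S dist :=
  ⟨fun _ _ _ _ => dist_nonneg, fun _ _ _ _ => dist_eq_zero, fun x _ y _ => dist_comm x y,
    fun x _ y _ z _ => dist_triangle x z y⟩

namespace IsMetricOn

variable {E : Type*} {S : Set E} {f g : E → E → ℝ} {w : E → ℝ}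

theorem congr (hf : IsMetricOn S f) (h : ∀ x ∈ S, ∀ y ∈ S, f x y = g x y) : IsMetricOn S g := by
  obtain ⟨nonneg, eq_zero_iff, symm, triangle⟩ := hf
  refine ⟨fun x hx y hy => ?_, fun x hx y hy => ?_, fun x hx y hy => ?_,
    fun x hx y hy z hz => ?_⟩
  · exact h x hx y hy ▸ nonneg x hx y hy
  · exact h x hx y hy ▸ eq_zero_iff x hx y hy
  · exact h x hx y hy ▸ h y hy x hx ▸ symm x hx y hy
  · exact h x hx y hy ▸ h x hx z hz ▸ h z hz y hy ▸ triangle x hx y hy z hz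

theorem comp_of_subadditive (hf : IsMetricOn S f) {φ : ℝ → ℝ}
    (eq_zero_iff : ∀ t, 0 ≤ t → (φ t = 0 ↔ t = 0)) (mono : MonotoneOn φ (Set.Ici 0))
    (subadd : ∀ s t, 0 ≤ s → 0 ≤ t → φ (s + t) ≤ φ s + φ t) :
    IsMetricOn S fun x y => φ (f x y) := by
  obtain ⟨f_nonneg, f_eq_zero_iff, f_symm, f_triangle⟩ := hf
  refine ⟨fun x hx y hy => ?_, fun x hx y hy => ?_, fun x hx y hy => ?_,
    fun x hx y hy z hz => ?_⟩
  · calc 0 = φ 0 := ((eq_zero_iff 0 le_rfl).mpr rfl).symm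
      _ ≤ φ (f x y) := mono Set.self_mem_Ici (f_nonneg x hx y hy) (f_nonneg x hx y hy)
  · exact (eq_zero_iff _ (f_nonneg x hx y hy)).trans (f_eq_zero_iff x hx y hy)
  · exact congrArg φ (f_symm x hx y hy)
  · have hxz := f_nonneg x hx z hz
    have hzy := f_nonneg z hz y hy
    calc φ (f x y) ≤ φ (f x z + f z y) :=
          mono (f_nonneg x hx y hy) (add_nonneg hxz hzy) (f_triangle x hx y hy z hz)
      _ ≤ φ (f x z) + φ (f z y) := subadd _ _ hxz hzy

theorem const_mul (hf : IsMetricOn S f) {k : ℝ} (hk : 0 < k) :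
    IsMetricOn S fun x y => k * f x y :=
  hf.comp_of_subadditive (fun _ _ => mul_eq_zero_iff_left hk.ne')
    (fun _ _ _ _ hst => mul_le_mul_of_nonneg_left hst hk.le) fun s t _ _ => (mul_add k s t).le

theorem log_one_add (hf : IsMetricOn S f) : IsMetricOn S fun x y => Real.log (1 + f x y) := by
  refine hf.comp_of_subadditive (φ := fun t => Real.log (1 + t)) (fun t ht => ?_)
    (fun s hs t _ hst => ?_) (fun s t hs ht => ?_)
  · refine ⟨fun h => ?_, fun h => by simp only [h, add_zero, Real.log_one]⟩
    linarith [Real.eq_one_of_pos_of_log_eq_zero (by positivity) h]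
  · rw [Set.mem_Ici] at hs
    exact Real.log_le_log (by positivity) (by gcongr)
  · calc Real.log (1 + (s + t)) ≤ Real.log ((1 + s) * (1 + t)) :=
          Real.log_le_log (by positivity) (by linarith [mul_nonneg hs ht])
      _ = Real.log (1 + s) + Real.log (1 + t) := Real.log_mul (by positivity) (by positivity)

theorem div_add_const (hf : IsMetricOn S f) {k : ℝ} (hk : 0 < k) :
    IsMetricOn S fun x y => f x y / (f x y + k) := by
  refine hf.comp_of_subadditive (φ := fun t => t / (t + k)) (fun t ht => ?_)
    (fun s hs t ht hst => ?_) (fun s t hs ht => ?_)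
  · exact div_eq_zero_iff.trans (or_iff_left (by positivity))
  · rw [Set.mem_Ici] at hs ht
    rw [div_le_div_iff₀ (by positivity) (by positivity)]
    linarith [mul_le_mul_of_nonneg_right hst hk.le]
  · calc (s + t) / (s + t + k) = s / (s + t + k) + t / (s + t + k) := add_div _ _ _
      _ ≤ s / (s + k) + t / (t + k) := by gcongr <;> linarith

theorem div_add_of_ptolemy (hf : IsMetricOn S f) (w_pos : ∀ x ∈ S, 0 < w x)
    (ptolemy : ∀ x ∈ S, ∀ y ∈ S, ∀ z ∈ S, f x y * w z ≤ f x z * w y + f z y * w x) :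
    IsMetricOn S fun x y => f x y / (w x + w y) := by
  obtain ⟨nonneg, eq_zero_iff, symm, triangle⟩ := hf
  have sum_pos : ∀ x ∈ S, ∀ y ∈ S, 0 < w x + w y := fun x hx y hy =>
    add_pos (w_pos x hx) (w_pos y hy)
  refine ⟨fun x hx y hy => ?_, fun x hx y hy => ?_, fun x hx y hy => ?_,
    fun x hx y hy z hz => ?_⟩
  · exact div_nonneg (nonneg x hx y hy) (sum_pos x hx y hy).le
  · rw [div_eq_zero_iff, or_iff_left (sum_pos x hx y hy).ne', eq_zero_iff x hx y hy]
  · simp only [symm x hx y hy, add_comm (w x)]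
  · exact div_add_triangle_of_ptolemy (w_pos x hx) (w_pos y hy) (w_pos z hz).le
      (nonneg x hx z hz) (nonneg z hz y hy) (triangle x hx y hy z hz) (ptolemy x hx y hy z hz)

end IsMetricOn

theorem stmt5_general {E : Type*} {S : Set E} {d : E → E → ℝ} {w : E → ℝ} {c : ℝ}
    (hd : IsMetricOn S d) (w_pos : ∀ x ∈ S, 0 < w x)
    (ptolemy : ∀ x ∈ S, ∀ y ∈ S, ∀ z ∈ S, d x y * w z ≤ d x z * w y + d z y * w x)
    (hc : 0 < c) :
    IsMetricOn S (fun x y => 2 * d x y / (c * (w x + w y))) ∧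
    IsMetricOn S (fun x y => Real.log (1 + 2 * d x y / (c * (w x + w y)))) ∧
    IsMetricOn S (fun x y => d x y / (d x y + c * (w x + w y))) := by
  have quotient : IsMetricOn S fun x y => d x y / (w x + w y) := hd.div_add_of_ptolemy w_pos ptolemy
  have scaled : IsMetricOn S fun x y => 2 * d x y / (c * (w x + w y)) := by
    simpa only [mul_div_mul_comm] using quotient.const_mul (div_pos two_pos hc)
  refine ⟨scaled, scaled.log_one_add, (quotient.div_add_const hc).congr fun x hx y hy => ?_⟩
  have sum_ne_zero : w x + w y ≠ 0 := (add_pos (w_pos x hx) (w_pos y hy)).ne'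
  rw [div_add' _ _ _ sum_ne_zero, div_div_div_cancel_right₀ sum_ne_zero]

theorem stmt5 (n : ℕ) (hn : 2 ≤ n) (c : ℝ) (hc : 0 < c) :
    IsMetricOn {x : EuclideanSpace ℝ (Fin n) | x ≠ 0}
      (fun x y => 2 * dist x y / (c * (‖x‖ + ‖y‖))) ∧
    IsMetricOn {x : EuclideanSpace ℝ (Fin n) | x ≠ 0}
      (fun x y => Real.log (1 + 2 * dist x y / (c * (‖x‖ + ‖y‖)))) ∧
    IsMetricOn {x : EuclideanSpace ℝ (Fin n) | x ≠ 0}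
      (fun x y => dist x y / (dist x y + c * (‖x‖ + ‖y‖))) :=
  stmt5_general (isMetricOn_dist _) (fun _ => norm_pos_iff.mpr) (fun x _ y _ z _ => by
    simpa using EuclideanGeometry.mul_dist_le_mul_dist_add_mul_dist x z y 0) hc
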